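/- Assume a22 = 0 and let θ > 0. Then the matrix M(θ) is convergent to zero if and only if a11 < 1 and a12·a21·(e^{θT}−1)/θ < 1 − a11. -/

import Mathlib

open Filter

/-- A square matrix with nonnegative real entries is *convergent to zero* if its powers
tend to the zero matrix. -/
def ConvergentToZero {n : ℕ} (M : Matrix (Fin n) (Fin n) ℝ) : Prop :=
  Tendsto (fun k : ℕ => M ^ k) atTop (nhds 0)

/-- The matrix `M(θ)` for `θ > 0`: rows `(a11, a12 (e^{θT}-1)/θ)` and
`(a21, a22 (1-e^{-θT})/θ)`. -/
noncomputable def Mmat (T a11 a12 a21 a22 θ : ℝ) : Matrix (Fin 2) (Fin 2) ℝ :=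
  !![a11, a12 * ((Real.exp (θ * T) - 1) / θ);
     a21, a22 * ((1 - Real.exp (-θ * T)) / θ)]

namespace Matrix

variable {n : ℕ} {M : Matrix (Fin n) (Fin n) ℝ}

lemma mulVec_mono_of_nonneg (hM : ∀ i j, 0 ≤ M i j) : Monotone (M *ᵥ ·) :=
  fun _ _ huv i => dotProduct_le_dotProduct_of_nonneg_left huv (hM i)

lemma pow_entry_nonneg (hM : ∀ i j, 0 ≤ M i j) (k : ℕ) (i j : Fin n) : 0 ≤ (M ^ k) i j := by
  induction k generalizing i j with
  | zero => rw [pow_zero, one_apply]; split_ifs <;> norm_num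
  | succ k ih =>
    rw [pow_succ, mul_apply]
    exact Finset.sum_nonneg fun l _ => mul_nonneg (ih i l) (hM l j)

lemma le_pow_mulVec (hM : ∀ i j, 0 ≤ M i j) {w : Fin n → ℝ} (hw : w ≤ M *ᵥ w) (k : ℕ) :
    w ≤ (M ^ k) *ᵥ w := by
  induction k with
  | zero => simp
  | succ k ih =>
    rw [pow_succ', ← mulVec_mulVec]
    exact hw.trans (mulVec_mono_of_nonneg hM ih)

lemma pow_mulVec_le (hM : ∀ i j, 0 ≤ M i j) {v : Fin n → ℝ} {r : ℝ} (hr : 0 ≤ r)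
    (hv : M *ᵥ v ≤ r • v) (k : ℕ) : (M ^ k) *ᵥ v ≤ r ^ k • v := by
  induction k with
  | zero => simp
  | succ k ih =>
    rw [pow_succ', ← mulVec_mulVec]
    calc M *ᵥ ((M ^ k) *ᵥ v) ≤ M *ᵥ (r ^ k • v) := mulVec_mono_of_nonneg hM ih
      _ = r ^ k • (M *ᵥ v) := mulVec_smul _ _ _
      _ ≤ r ^ k • (r • v) := smul_le_smul_of_nonneg_left hv (pow_nonneg hr k)
      _ = r ^ (k + 1) • v := by rw [smul_smul, pow_succ]

end Matrix

open Matrix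

/-- A nonnegative matrix that contracts a positive vector is convergent to zero. -/
lemma convergentToZero_of_mulVec_le {n : ℕ} {M : Matrix (Fin n) (Fin n) ℝ}
    (hM : ∀ i j, 0 ≤ M i j) {v : Fin n → ℝ} (hv : ∀ i, 0 < v i) {r : ℝ} (hr : 0 ≤ r)
    (hr1 : r < 1) (hMv : M *ᵥ v ≤ r • v) : ConvergentToZero M := by
  refine tendsto_pi_nhds.2 fun i => tendsto_pi_nhds.2 fun j => ?_
  have hlim : Tendsto (fun k : ℕ => r ^ k * (v i / v j)) atTop (nhds 0) := by
    simpa using (tendsto_pow_atTop_nhds_zero_of_lt_one hr hr1).mul_const (v i / v j)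
  refine squeeze_zero (fun k => pow_entry_nonneg hM k i j) (fun k => ?_) hlim
  rw [← mul_div_assoc, le_div_iff₀ (hv j)]
  calc (M ^ k) i j * v j ≤ ((M ^ k) *ᵥ v) i :=
        Finset.single_le_sum (f := fun l => (M ^ k) i l * v l)
          (fun l _ => mul_nonneg (pow_entry_nonneg hM k i l) (hv l).le) (Finset.mem_univ j)
    _ ≤ r ^ k * v i := pow_mulVec_le hM hr hMv k i

/-- A nonnegative matrix convergent to zero expands only nonpositive vectors. -/
lemma ConvergentToZero.nonpos_of_le_mulVec {n : ℕ} {M : Matrix (Fin n) (Fin n) ℝ}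
    (h : ConvergentToZero M) (hM : ∀ i j, 0 ≤ M i j) {w : Fin n → ℝ} (hw : w ≤ M *ᵥ w) :
    w ≤ 0 := by
  have hlim : Tendsto (fun k : ℕ => (M ^ k) *ᵥ w) atTop (nhds (0 *ᵥ w)) :=
    ((continuous_id.matrix_mulVec continuous_const).tendsto 0).comp h
  rw [zero_mulVec] at hlim
  exact ge_of_tendsto' hlim (le_pow_mulVec hM hw)

lemma convergentToZero_of_corner_zero_iff {a b c : ℝ} (ha : 0 ≤ a) (hb : 0 ≤ b) (hc : 0 ≤ c) :
    ConvergentToZero !![a, b; c, 0] ↔ a + b * c < 1 := by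
  have hM : ∀ i j, 0 ≤ !![a, b; c, 0] i j := by
    intro i j
    fin_cases i <;> fin_cases j <;> simp [ha, hb, hc]
  constructor
  · intro h
    by_contra! hlt
    have hw : ![1, c] ≤ !![a, b; c, 0] *ᵥ ![1, c] := by
      intro i
      fin_cases i <;> simp [mulVec, dotProduct, Fin.sum_univ_two, hlt]
    have := h.nonpos_of_le_mulVec hM hw 0
    norm_num at this
  · intro h
    obtain ⟨y, hcy, hy⟩ : ∃ y, c < y ∧ a + b * y < 1 := by
      have hcont : Tendsto (fun y => a + b * y) (nhdsWithin c (Set.Ioi c)) (nhds (a + b * c)) :=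
        ((by fun_prop : Continuous fun y => a + b * y).tendsto c).mono_left nhdsWithin_le_nhds
      exact (eventually_mem_nhdsWithin.and (hcont.eventually_lt_const h)).exists
    have hy0 : 0 < y := hc.trans_lt hcy
    refine convergentToZero_of_mulVec_le hM (v := ![1, y]) (r := max (a + b * y) (c / y))
      ?_ ?_ ?_ ?_
    · intro i
      fin_cases i <;> simp [hy0]
    · exact le_max_of_le_left (by positivity)
    · exact max_lt hy ((div_lt_one hy0).2 hcy)
    · intro i
      fin_cases i
      · simp [mulVec, dotProduct, Fin.sum_univ_two]
      · simpa [mulVec, dotProduct, Fin.sum_univ_two] using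
          (div_le_iff₀ hy0).1 (le_max_right (a + b * y) (c / y))

/-- If `a22 = 0` and `θ > 0`, then `M(θ)` is convergent to zero if and only
if `a11 < 1` and `a12 a21 (e^{θT}-1)/θ < 1 - a11`. -/
theorem mmat_convergentToZero_iff_of_a22_eq_zero (T a11 a12 a21 a22 θ : ℝ)
    (hT : 0 < T) (h11 : 0 ≤ a11) (h12 : 0 ≤ a12) (h21 : 0 ≤ a21) (h22 : a22 = 0)
    (hθ : 0 < θ) :
    ConvergentToZero (Mmat T a11 a12 a21 a22 θ) ↔
      (a11 < 1 ∧ a12 * a21 * ((Real.exp (θ * T) - 1) / θ) < 1 - a11) := by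
  have hexp : 0 ≤ (Real.exp (θ * T) - 1) / θ :=
    div_nonneg (sub_nonneg.2 (Real.one_le_exp (by positivity))) hθ.le
  have hprod : 0 ≤ a12 * a21 * ((Real.exp (θ * T) - 1) / θ) := by positivity
  rw [Mmat, h22, zero_mul, convergentToZero_of_corner_zero_iff h11 (mul_nonneg h12 hexp) h21,
    mul_right_comm]
  exact ⟨fun h => ⟨by linarith, by linarith⟩, fun h => by linarith [h.2]⟩
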